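/- In U(𝔤): (F₂₁²)_L(a) = −2F₂₁ and (F₂₁³)_L(a) = 0; there exist nonzero rational numbers C₁, C₂ such that (F₂₁⁴)_L(b) = C₁·(F₃₁F₁₁ − F₃₂F₁₀) and (F₂₁⁶)_L(c) = C₂·(F₃₁²F₀₁ − F₃₂F₃₁H₀₁ − F₃₂²E₀₁); moreover (F₂₁⁵)_L(b) = 0 and (F₂₁⁷)_L(c) = 0. (The paper gives C₁ = 4! and C₂ = −6!.) -/

import Mathlib

/-- The canonical embedding of a Lie algebra into its universal enveloping algebra. -/
noncomputable def ιU {L : Type*} [LieRing L] [LieAlgebra ℂ L] (x : L) :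
    UniversalEnvelopingAlgebra ℂ L :=
  UniversalEnvelopingAlgebra.ι ℂ x

/-- The adjoint action `X_L : f ↦ Xf − fX` of `X ∈ L` on `U(L)`. -/
noncomputable def adU {L : Type*} [LieRing L] [LieAlgebra ℂ L] (x : L)
    (f : UniversalEnvelopingAlgebra ℂ L) : UniversalEnvelopingAlgebra ℂ L :=
  ιU x * f - f * ιU x

/-- A Lie algebra over `ℂ` equipped with Chevalley generators of type `G₂`:
`E₁₀, F₁₀, H₁₀` correspond to the short simple root `α` and `E₀₁, F₀₁, H₀₁` to the long
simple root `β`, subject to the Chevalley relations and the Serre relations, and the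
generators generate the Lie algebra.  (By Serre's theorem such a Lie algebra is a quotient of
the simple Lie algebra of type `G₂`.) -/
structure G2Gens (L : Type*) [LieRing L] [LieAlgebra ℂ L] where
  E10 : L
  E01 : L
  F10 : L
  F01 : L
  H10 : L
  H01 : L
  hH10H01 : ⁅H10, H01⁆ = 0
  hE10F10 : ⁅E10, F10⁆ = H10
  hE01F01 : ⁅E01, F01⁆ = H01
  hE10F01 : ⁅E10, F01⁆ = 0
  hE01F10 : ⁅E01, F10⁆ = 0
  hH10E10 : ⁅H10, E10⁆ = (2 : ℂ) • E10
  hH01E01 : ⁅H01, E01⁆ = (2 : ℂ) • E01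
  hH10E01 : ⁅H10, E01⁆ = (-3 : ℂ) • E01
  hH01E10 : ⁅H01, E10⁆ = (-1 : ℂ) • E10
  hH10F10 : ⁅H10, F10⁆ = (-2 : ℂ) • F10
  hH01F01 : ⁅H01, F01⁆ = (-2 : ℂ) • F01
  hH10F01 : ⁅H10, F01⁆ = (3 : ℂ) • F01
  hH01F10 : ⁅H01, F10⁆ = (1 : ℂ) • F10
  serreE1 : ⁅E10, ⁅E10, ⁅E10, ⁅E10, E01⁆⁆⁆⁆ = 0
  serreE2 : ⁅E01, ⁅E01, E10⁆⁆ = 0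
  serreF1 : ⁅F10, ⁅F10, ⁅F10, ⁅F10, F01⁆⁆⁆⁆ = 0
  serreF2 : ⁅F01, ⁅F01, F10⁆⁆ = 0
  generates : LieSubalgebra.lieSpan ℂ L {E10, E01, F10, F01, H10, H01} = ⊤

namespace G2Gens

variable {L : Type*} [LieRing L] [LieAlgebra ℂ L] (g : G2Gens L)

/-- The root vector `E₁₁ = [E₁₀, E₀₁]`. -/
def E11 : L := ⁅g.E10, g.E01⁆
/-- The root vector `E₂₁ = (1/2)[E₁₁, E₁₀]`. -/
noncomputable def E21 : L := (2 : ℂ)⁻¹ • ⁅g.E11, g.E10⁆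
/-- The root vector `E₃₁ = (1/3)[E₂₁, E₁₀]`. -/
noncomputable def E31 : L := (3 : ℂ)⁻¹ • ⁅g.E21, g.E10⁆
/-- The root vector `E₃₂ = [E₃₁, E₀₁]`. -/
noncomputable def E32 : L := ⁅g.E31, g.E01⁆
/-- The root vector `F₁₁ = [F₀₁, F₁₀]`. -/
def F11 : L := ⁅g.F01, g.F10⁆
/-- The root vector `F₂₁ = (1/2)[F₁₀, F₁₁]`. -/
noncomputable def F21 : L := (2 : ℂ)⁻¹ • ⁅g.F10, g.F11⁆
/-- The root vector `F₃₁ = (1/3)[F₁₀, F₂₁]`. -/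
noncomputable def F31 : L := (3 : ℂ)⁻¹ • ⁅g.F10, g.F21⁆
/-- The root vector `F₃₂ = [F₀₁, F₃₁]`. -/
noncomputable def F32 : L := ⁅g.F01, g.F31⁆
/-- The coroot `H₁₁ = H₁₀ + 3H₀₁`. -/
def H11 : L := g.H10 + (3 : ℂ) • g.H01
/-- The coroot `H₂₁ = 2H₁₀ + 3H₀₁`. -/
def H21 : L := (2 : ℂ) • g.H10 + (3 : ℂ) • g.H01
/-- The coroot `H₃₁ = H₁₀ + H₀₁`. -/
def H31 : L := g.H10 + g.H01
/-- The coroot `H₃₂ = H₁₀ + 2H₀₁`. -/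
def H32 : L := g.H10 + (2 : ℂ) • g.H01

/-- The element `a = E₂₁` of `U(𝔤)`. -/
noncomputable def aU : UniversalEnvelopingAlgebra ℂ L := ιU g.E21
/-- The element `b = E₃₁E₁₁ − E₃₂E₁₀` of `U(𝔤)`. -/
noncomputable def bU : UniversalEnvelopingAlgebra ℂ L :=
  ιU g.E31 * ιU g.E11 - ιU g.E32 * ιU g.E10
/-- The element `c = E₃₁²E₀₁ − E₃₂E₃₁H₀₁ − E₃₂²F₀₁` of `U(𝔤)`. -/
noncomputable def cU : UniversalEnvelopingAlgebra ℂ L :=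
  ιU g.E31 * ιU g.E31 * ιU g.E01 - ιU g.E32 * ιU g.E31 * ιU g.H01
    - ιU g.E32 * ιU g.E32 * ιU g.F01
/-- The element `u = (1/3)a² − b` of `U(𝔤)`. -/
noncomputable def uU : UniversalEnvelopingAlgebra ℂ L :=
  (3 : ℂ)⁻¹ • (g.aU * g.aU) - g.bU
/-- The element `v = (2/9)a³ − ab − 3c` of `U(𝔤)`. -/
noncomputable def vU : UniversalEnvelopingAlgebra ℂ L :=
  ((2 : ℂ) / 9) • (g.aU * g.aU * g.aU) - g.aU * g.bU - (3 : ℂ) • g.cU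

/-- `f ≡ h (mod U(𝔤)𝔫₊)`:  `f − h` lies in the left ideal of `U(𝔤)` generated by `E₁₀`
and `E₀₁`. -/
def EqModN (f h : UniversalEnvelopingAlgebra ℂ L) : Prop :=
  ∃ A B : UniversalEnvelopingAlgebra ℂ L, f - h = A * ιU g.E10 + B * ιU g.E01

end G2Gens

/-!
Put `D = ad F₂₁`, `p = E₃₁` and `q = E₃₂`. Under `D`, both `p` and `q` generate strings of length
four, `E₃₁ ↦ E₁₀ ↦ -2 F₁₁ ↦ 6 F₃₂` and `E₃₂ ↦ E₁₁ ↦ 2 F₁₀ ↦ -6 F₃₁`; the second is the image of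
the first under `[·, E₀₁]`, because the `𝔰𝔩₂` of the long root `β` commutes with `F₂₁`. In other
words `p` and `q` behave like polynomials of degree `3` over the constants `E₀₁`, `H₀₁`, `F₀₁` of
the derivation `D` of `U(𝔤)`. Since `b = p * D q - q * D p` is a Wronskian, the leading terms of its
two products cancel and `D⁴ b` is read off the next ones, while `c` is a quadratic form in `p`, `q`
with constant coefficients, so that `D⁶ c` is `20` times its value at `(D³ p, D³ q)`.
-/

/-- `x` behaves under `D` like a polynomial of degree at most `n`, with `n`-th derivative the
constant `t`, possibly `0`. -/
def HasTopDerivative {A : Type*} [Zero A] (D : A → A) (n : ℕ) (x t : A) : Prop :=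
  D^[n] x = t ∧ D t = 0

namespace HasTopDerivative

lemma trans_eq {A : Type*} [Zero A] {D : A → A} {n : ℕ} {x s t : A}
    (h : HasTopDerivative D n x s) (hst : s = t) : HasTopDerivative D n x t :=
  hst ▸ h

lemma map {A B : Type*} [Zero A] [Zero B] {D : A → A} {D' : B → B} {φ : A → B}
    (hφ : Function.Semiconj φ D D') (hφ0 : φ 0 = 0) {n : ℕ} {x t : A}
    (h : HasTopDerivative D n x t) : HasTopDerivative D' n (φ x) (φ t) :=
  ⟨by rw [← (hφ.iterate_right n).eq, h.1], by rw [← hφ.eq, h.2, hφ0]⟩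

lemma iterate_succ {A : Type*} [Zero A] {D : A → A} {n : ℕ} {x t : A}
    (h : HasTopDerivative D n x t) : D^[n + 1] x = 0 := by
  rw [Function.iterate_succ_apply', h.1, h.2]

lemma apply_of_succ {A : Type*} [Zero A] {D : A → A} {n : ℕ} {x t : A}
    (h : HasTopDerivative D (n + 1) x t) : HasTopDerivative D n (D x) t := h

lemma iterate_of_lt {A : Type*} [AddZeroClass A] {D : A →+ A} {m n : ℕ} {x s : A}
    (h : HasTopDerivative D m x s) (hmn : m < n) : D^[n] x = 0 := by
  obtain ⟨k, rfl⟩ := Nat.exists_eq_add_of_le' hmn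
  rw [Function.iterate_add_apply, h.iterate_succ, iterate_map_zero]

lemma sub {A : Type*} [AddGroup A] {D : A →+ A} {n : ℕ} {x y s t : A}
    (hx : HasTopDerivative D n x s) (hy : HasTopDerivative D n y t) :
    HasTopDerivative D n (x - y) (s - t) :=
  ⟨by rw [iterate_map_sub, hx.1, hy.1], by rw [map_sub, hx.2, hy.2, sub_zero]⟩

end HasTopDerivative

section Leibniz

variable {A : Type*} [NonUnitalNonAssocSemiring A] {D : A →+ A}

open Finset in
lemma iterate_mul_eq_sum_antidiagonal (hD : ∀ x y, D (x * y) = D x * y + x * D y)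
    (n : ℕ) (x y : A) :
    D^[n] (x * y) = ∑ ij ∈ antidiagonal n, n.choose ij.1 • (D^[ij.1] x * D^[ij.2] y) := by
  induction n with
  | zero => simp
  | succ n ih =>
    rw [sum_antidiagonal_choose_succ_nsmul (M := A) (fun i j ↦ D^[i] x * D^[j] y) n]
    simp only [Function.iterate_succ_apply', ih, map_sum, map_nsmul, hD, smul_add,
      sum_add_distrib, add_comm (∑ ij ∈ antidiagonal n, _ • (D (D^[ij.1] x) * _))]
    congr 1
    refine sum_congr rfl fun ij hij ↦ ?_
    rw [n.choose_symm_of_eq_add (mem_antidiagonal.1 hij).symm]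

namespace HasTopDerivative

variable {m n : ℕ} {x y s t : A}

lemma mul (hD : ∀ x y, D (x * y) = D x * y + x * D y)
    (hx : HasTopDerivative D m x s) (hy : HasTopDerivative D n y t) :
    HasTopDerivative D (m + n) (x * y) ((m + n).choose m • (s * t)) := by
  refine ⟨?_, by rw [map_nsmul, hD, hx.2, hy.2, zero_mul, mul_zero, add_zero, smul_zero]⟩
  rw [iterate_mul_eq_sum_antidiagonal hD, Finset.sum_eq_single_of_mem (m, n) (by simp), hx.1, hy.1]
  rintro ⟨i, j⟩ hij hne
  have hij : i + j = m + n := by simpa using hij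
  obtain hi | hj : m < i ∨ n < j := by
    simp only [ne_eq, Prod.mk.injEq] at hne
    lia
  · simp only [hx.iterate_of_lt hi, zero_mul, smul_zero]
  · simp only [hy.iterate_of_lt hj, mul_zero, smul_zero]

lemma mul_const (hD : ∀ x y, D (x * y) = D x * y + x * D y)
    (hx : HasTopDerivative D m x s) (hy : D y = 0) : HasTopDerivative D m (x * y) (s * y) := by
  simpa using hx.mul hD (n := 0) ⟨rfl, hy⟩

lemma iterate_mul_succ (hD : ∀ x y, D (x * y) = D x * y + x * D y)
    (hx : HasTopDerivative D (m + 1) x s) (hy : HasTopDerivative D (n + 1) y t) :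
    D^[m + n + 1] (x * y) =
      (m + n + 1).choose (m + 1) • (s * D^[n] y) + (m + n + 1).choose m • (D^[m] x * t) := by
  rw [iterate_mul_eq_sum_antidiagonal hD, Finset.sum_eq_add_of_mem (m + 1, n) (m, n + 1)
    (by simp only [Finset.HasAntidiagonal.mem_antidiagonal]; lia)
    (by simp only [Finset.HasAntidiagonal.mem_antidiagonal]; lia) (by simp), hx.1, hy.1]
  rintro ⟨i, j⟩ hij hne
  have hij : i + j = m + n + 1 := by simpa using hij
  obtain hi | hj : m + 1 < i ∨ n + 1 < j := by
    simp only [ne_eq, Prod.mk.injEq] at hne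
    lia
  · simp only [hx.iterate_of_lt hi, zero_mul, smul_zero]
  · simp only [hy.iterate_of_lt hj, mul_zero, smul_zero]

end HasTopDerivative

end Leibniz

lemma catalan_add_choose (n : ℕ) : catalan n + (2 * n).choose (n + 1) = (2 * n).choose n := by
  have h_choose : (2 * n).choose (n + 1) * (n + 1) = (2 * n).choose n * n := by
    rw [Nat.choose_succ_right_eq, two_mul, Nat.add_sub_cancel]
  have h_catalan : (n + 1) * catalan n = (2 * n).choose n := succ_mul_catalan_eq_centralBinom n
  refine Nat.eq_of_mul_eq_mul_left n.succ_pos ?_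
  linarith

/-- The Wronskian has formal degree `2 * n + 1`, but its derivative of that order vanishes. -/
lemma HasTopDerivative.wronskian {A : Type*} [NonUnitalNonAssocRing A] {D : A →+ A} {n : ℕ}
    {x y s t : A} (hD : ∀ x y, D (x * y) = D x * y + x * D y)
    (hx : HasTopDerivative D (n + 1) x s) (hy : HasTopDerivative D (n + 1) y t)
    (hst : Commute s t) (hxt : Commute (D^[n] x) t) (hys : Commute (D^[n] y) s) :
    HasTopDerivative D (2 * n) (x * D y - y * D x)
      (catalan n • (t * D^[n] x - s * D^[n] y)) := by
  have hDx : D (D^[n] x) = s := by rw [← Function.iterate_succ_apply' (⇑D), hx.1]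
  have hDy : D (D^[n] y) = t := by rw [← Function.iterate_succ_apply' (⇑D), hy.1]
  constructor
  · rcases n with _ | m
    · change D x = s at hDx
      change D y = t at hDy
      simpa [hDx, hDy] using congr($hxt.eq - $hys.eq)
    · rw [iterate_map_sub, show 2 * (m + 1) = m + 1 + m + 1 by ring,
        iterate_mul_succ hD hx hy.apply_of_succ, iterate_mul_succ hD hy hx.apply_of_succ,
        show m + 1 + m + 1 = 2 * (m + 1) by ring, ← catalan_add_choose (m + 1), hxt.eq, hys.eq]
      simp only [← Function.iterate_succ_apply]
      module
  · simp only [map_nsmul, map_sub, hD, hDx, hDy, hx.2, hy.2, zero_mul, zero_add, hst.eq, sub_self,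
      smul_zero]

section Enveloping

variable {L : Type*} [LieRing L] [LieAlgebra ℂ L]

lemma ιU_smul (c : ℂ) (x : L) : ιU (c • x) = c • ιU x := map_smul _ c x

lemma ιU_zero : ιU (0 : L) = 0 := map_zero _

lemma adU_ιU (x y : L) : adU x (ιU y) = ιU ⁅x, y⁆ := by
  simp only [adU, ιU, LieHom.map_lie, LieRing.of_associative_ring_bracket]

lemma commute_ιU {x y : L} (h : ⁅x, y⁆ = 0) : Commute (ιU x) (ιU y) :=
  sub_eq_zero.1 (by rw [← adU, adU_ιU, h, ιU_zero])

/-- `adU x` as an additive endomorphism of `U(L)`, the form in which the Leibniz calculus of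
`HasTopDerivative` applies to it. -/
noncomputable def adUHom (x : L) :
    UniversalEnvelopingAlgebra ℂ L →+ UniversalEnvelopingAlgebra ℂ L :=
  AddMonoidHom.mk' (adU x) fun f h ↦ by simp only [adU, mul_add, add_mul, add_sub_add_comm]

lemma adUHom_ιU (x y : L) : adUHom x (ιU y) = ιU ⁅x, y⁆ := adU_ιU x y

lemma adUHom_mul (x : L) (f h : UniversalEnvelopingAlgebra ℂ L) :
    adUHom x (f * h) = adUHom x f * h + f * adUHom x h := by
  change adU x (f * h) = adU x f * h + f * adU x h
  simp only [adU]
  noncomm_ring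

lemma HasTopDerivative.map_ιU {x y z : L} {n : ℕ} (h : HasTopDerivative (⁅x, ·⁆) n y z) :
    HasTopDerivative (adUHom x) n (ιU y) (ιU z) :=
  h.map (fun w ↦ (adUHom_ιU x w).symm) ιU_zero

end Enveloping

namespace G2Gens

variable {L : Type*} [LieRing L] [LieAlgebra ℂ L] (g : G2Gens L)

lemma lie_F10_E10 : ⁅g.F10, g.E10⁆ = -g.H10 := by rw [← lie_skew, g.hE10F10]

lemma lie_F01_E10 : ⁅g.F01, g.E10⁆ = 0 := by rw [← lie_skew, g.hE10F01, neg_zero]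

lemma lie_F10_E01 : ⁅g.F10, g.E01⁆ = 0 := by rw [← lie_skew, g.hE01F10, neg_zero]

lemma lie_F01_E01 : ⁅g.F01, g.E01⁆ = -g.H01 := by rw [← lie_skew, g.hE01F01]

lemma lie_F10_F11 : ⁅g.F10, g.F11⁆ = (2 : ℂ) • g.F21 := by rw [F21]; module

lemma lie_F10_F21 : ⁅g.F10, g.F21⁆ = (3 : ℂ) • g.F31 := by rw [F31]; module

lemma lie_F11 (x : L) : ⁅g.F11, x⁆ = ⁅g.F01, ⁅g.F10, x⁆⁆ - ⁅g.F10, ⁅g.F01, x⁆⁆ := by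
  rw [F11, lie_lie]

lemma lie_F21 (x : L) :
    ⁅g.F21, x⁆ = (2 : ℂ)⁻¹ • (⁅g.F10, ⁅g.F11, x⁆⁆ - ⁅g.F11, ⁅g.F10, x⁆⁆) := by
  rw [F21, smul_lie, lie_lie]

lemma lie_H10_F11 : ⁅g.H10, g.F11⁆ = g.F11 := by
  rw [F11, leibniz_lie, g.hH10F01, g.hH10F10, smul_lie, lie_smul]; module

lemma lie_H10_F21 : ⁅g.H10, g.F21⁆ = -g.F21 := by
  rw [F21, lie_smul, leibniz_lie, g.hH10F10, lie_H10_F11, smul_lie]; module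

lemma lie_H10_E11 : ⁅g.H10, g.E11⁆ = -g.E11 := by
  rw [E11, leibniz_lie, g.hH10E10, g.hH10E01, smul_lie, lie_smul]; module

lemma lie_H21_E10 : ⁅g.H21, g.E10⁆ = g.E10 := by
  rw [H21, add_lie, smul_lie, smul_lie, g.hH10E10, g.hH01E10]; module

lemma lie_F10_E11 : ⁅g.F10, g.E11⁆ = (3 : ℂ) • g.E01 := by
  rw [E11, leibniz_lie, lie_F10_E10, lie_F10_E01, neg_lie, g.hH10E01, lie_zero]; module

lemma lie_F01_E11 : ⁅g.F01, g.E11⁆ = -g.E10 := by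
  rw [E11, leibniz_lie, lie_F01_E10, lie_F01_E01, lie_neg, lie_skew, g.hH01E10, zero_lie]; module

lemma lie_F10_E21 : ⁅g.F10, g.E21⁆ = (-2 : ℂ) • g.E11 := by
  rw [E21, lie_smul, leibniz_lie, lie_F10_E11, lie_F10_E10, smul_lie, ← lie_skew g.E01 g.E10,
    ← E11, lie_neg, lie_skew, lie_H10_E11]
  module

lemma lie_F01_E21 : ⁅g.F01, g.E21⁆ = 0 := by
  rw [E21, lie_smul, leibniz_lie, lie_F01_E11, lie_F01_E10, neg_lie, lie_self, lie_zero]; module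

lemma lie_F11_E10 : ⁅g.F11, g.E10⁆ = (3 : ℂ) • g.F01 := by
  rw [lie_F11, lie_F10_E10, lie_F01_E10, lie_neg, lie_skew, g.hH10F01, lie_zero, sub_zero]

lemma lie_F11_E01 : ⁅g.F11, g.E01⁆ = -g.F10 := by
  rw [lie_F11, lie_F10_E01, lie_F01_E01, lie_neg, lie_skew, g.hH01F10, lie_zero]; module

lemma lie_F11_E11 : ⁅g.F11, g.E11⁆ = -g.H11 := by
  rw [lie_F11, lie_F10_E11, lie_F01_E11, lie_smul, lie_F01_E01, lie_neg, lie_F10_E10, H11]; module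

lemma lie_F11_E21 : ⁅g.F11, g.E21⁆ = (2 : ℂ) • g.E10 := by
  rw [lie_F11, lie_F10_E21, lie_F01_E21, lie_smul, lie_F01_E11, lie_zero]; module

lemma lie_F01_F21 : ⁅g.F01, g.F21⁆ = 0 := by
  rw [F21, lie_smul, leibniz_lie, ← F11, lie_self, show ⁅g.F01, g.F11⁆ = 0 from g.serreF2, lie_zero,
    add_zero, smul_zero]

lemma lie_F10_F31 : ⁅g.F10, g.F31⁆ = 0 := by
  have h : (-6 : ℂ) • ⁅g.F10, g.F31⁆ = 0 := by
    rw [← g.serreF1, ← lie_skew g.F10 g.F01, ← F11, lie_neg, lie_F10_F11, lie_neg, lie_smul,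
      lie_F10_F21, lie_neg, lie_smul, lie_smul]
    module
  simpa using h

lemma lie_F11_F21 : ⁅g.F11, g.F21⁆ = (3 : ℂ) • g.F32 := by
  rw [lie_F11, lie_F10_F21, lie_F01_F21, lie_smul, ← F32, lie_zero, sub_zero]

lemma lie_F11_F31 : ⁅g.F11, g.F31⁆ = 0 := by
  have h_jacobi : ⁅g.F11, g.F31⁆ = -⁅g.F10, g.F32⁆ := by
    rw [lie_F11, lie_F10_F31, ← F32, lie_zero, zero_sub]
  have h_leibniz : (3 : ℂ) • ⁅g.F10, g.F32⁆ = (3 : ℂ) • ⁅g.F11, g.F31⁆ := by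
    rw [← lie_smul, ← lie_F11_F21, leibniz_lie, lie_F10_F11, lie_F10_F21, smul_lie, lie_self,
      lie_smul, smul_zero, zero_add]
  have h_double : (6 : ℂ) • ⁅g.F11, g.F31⁆ = 0 := by
    linear_combination (norm := module) (3 : ℂ) • h_jacobi - h_leibniz
  simpa using h_double

lemma lie_F10_F32 : ⁅g.F10, g.F32⁆ = 0 := by
  rw [F32, leibniz_lie, lie_F10_F31, lie_zero, add_zero, ← lie_skew g.F10 g.F01, ← F11, neg_lie,
    lie_F11_F31, neg_zero]

lemma lie_F21_E01 : ⁅g.F21, g.E01⁆ = 0 := by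
  rw [lie_F21, lie_F11_E01, lie_F10_E01, lie_neg, lie_self, neg_zero, lie_zero, sub_zero, smul_zero]

lemma lie_F21_F01 : ⁅g.F21, g.F01⁆ = 0 := by
  rw [← lie_skew, lie_F01_F21, neg_zero]

lemma lie_F21_H01 : ⁅g.F21, g.H01⁆ = 0 := by
  rw [← g.hE01F01, leibniz_lie, lie_F21_E01, lie_F21_F01, zero_lie, lie_zero, add_zero]

lemma lie_F21_H21 : ⁅g.F21, g.H21⁆ = (2 : ℂ) • g.F21 := by
  rw [H21, lie_add, lie_smul, lie_smul, lie_F21_H01, ← lie_skew, lie_H10_F21]; module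

lemma lie_F21_E21 : ⁅g.F21, g.E21⁆ = -g.H21 := by
  rw [lie_F21, lie_F11_E21, lie_F10_E21, lie_smul, lie_smul, lie_F10_E10, lie_F11_E11, H11, H21]
  module

lemma lie_F21_E10 : ⁅g.F21, g.E10⁆ = (-2 : ℂ) • g.F11 := by
  rw [lie_F21, lie_F11_E10, lie_F10_E10, lie_smul, ← lie_skew g.F10 g.F01, ← F11, lie_neg, lie_skew,
    lie_H10_F11]
  module

lemma lie_F21_E31 : ⁅g.F21, g.E31⁆ = g.E10 := by
  rw [E31, lie_smul, leibniz_lie, lie_F21_E21, lie_F21_E10, neg_lie, lie_H21_E10, lie_smul,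
    ← lie_skew g.E21, lie_F11_E21]
  module

lemma lie_F21_F11 : ⁅g.F21, g.F11⁆ = (-3 : ℂ) • g.F32 := by
  rw [← lie_skew, lie_F11_F21]; module

lemma lie_F21_F10 : ⁅g.F21, g.F10⁆ = (-3 : ℂ) • g.F31 := by
  rw [← lie_skew, lie_F10_F21]; module

lemma lie_F21_E32 : ⁅g.F21, g.E32⁆ = g.E11 := by
  rw [E32, leibniz_lie, lie_F21_E31, lie_F21_E01, lie_zero, add_zero, E11]

lemma lie_F21_E11 : ⁅g.F21, g.E11⁆ = (2 : ℂ) • g.F10 := by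
  rw [E11, leibniz_lie, lie_F21_E10, lie_F21_E01, smul_lie, lie_F11_E01, lie_zero]; module

lemma lie_F21_F31 : ⁅g.F21, g.F31⁆ = 0 := by
  rw [lie_F21, lie_F11_F31, lie_F10_F31, lie_zero, lie_zero, sub_zero, smul_zero]

lemma lie_F21_F32 : ⁅g.F21, g.F32⁆ = 0 := by
  rw [F32, leibniz_lie, lie_F21_F01, lie_F21_F31, zero_lie, lie_zero, add_zero]

lemma lie_F31_F32 : ⁅g.F31, g.F32⁆ = 0 := by
  rw [F31, smul_lie, lie_lie, lie_F21_F32, lie_F10_F32, lie_zero, lie_zero, sub_zero, smul_zero]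

lemma hasTopDerivative_E21 :
    HasTopDerivative (⁅g.F21, ·⁆) 2 g.E21 ((-2 : ℂ) • g.F21) := by
  constructor
  · simp [lie_F21_E21, lie_F21_H21]
  · simp

lemma hasTopDerivative_E31 :
    HasTopDerivative (⁅g.F21, ·⁆) 3 g.E31 ((6 : ℂ) • g.F32) := by
  constructor
  · simp only [Function.iterate_succ_apply, Function.iterate_zero_apply, lie_F21_E31, lie_F21_E10,
      lie_smul, lie_F21_F11]
    module
  · simp [lie_F21_F32]

lemma hasTopDerivative_E32 :
    HasTopDerivative (⁅g.F21, ·⁆) 3 g.E32 ((-6 : ℂ) • g.F31) := by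
  constructor
  · simp only [Function.iterate_succ_apply, Function.iterate_zero_apply, lie_F21_E32, lie_F21_E11,
      lie_smul, lie_F21_F10]
    module
  · simp [lie_F21_F31]

lemma hasTopDerivative_aU :
    HasTopDerivative (adUHom g.F21) 2 g.aU ((-2 : ℂ) • ιU g.F21) := by
  simpa only [aU, ιU_smul] using g.hasTopDerivative_E21.map_ιU

lemma hasTopDerivative_bU :
    HasTopDerivative (adUHom g.F21) 4 g.bU
      ((24 : ℂ) • (ιU g.F31 * ιU g.F11 - ιU g.F32 * ιU g.F10)) := by
  have hDE31 : adUHom g.F21 (ιU g.E31) = ιU g.E10 := by rw [adUHom_ιU, lie_F21_E31]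
  have hDE32 : adUHom g.F21 (ιU g.E32) = ιU g.E11 := by rw [adUHom_ιU, lie_F21_E32]
  have hD2E31 : (adUHom g.F21)^[2] (ιU g.E31) = ιU ((-2 : ℂ) • g.F11) := by
    rw [Function.iterate_succ_apply, hDE31, Function.iterate_one, adUHom_ιU, lie_F21_E10]
  have hD2E32 : (adUHom g.F21)^[2] (ιU g.E32) = ιU ((2 : ℂ) • g.F10) := by
    rw [Function.iterate_succ_apply, hDE32, Function.iterate_one, adUHom_ιU, lie_F21_E11]
  have h := HasTopDerivative.wronskian (n := 2) (adUHom_mul g.F21)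
    g.hasTopDerivative_E31.map_ιU g.hasTopDerivative_E32.map_ιU
    (commute_ιU (by simp [← lie_skew g.F32, lie_F31_F32]))
    (hD2E31 ▸ commute_ιU (by simp [lie_F11_F31])) (hD2E32 ▸ commute_ιU (by simp [lie_F10_F32]))
  rw [hDE31, hDE32, hD2E31, hD2E32, catalan_two] at h
  refine h.trans_eq ?_
  simp only [ιU_smul, smul_mul_smul_comm]
  module

lemma hasTopDerivative_cU :
    HasTopDerivative (adUHom g.F21) 6 g.cU
      ((-720 : ℂ) • (ιU g.F31 * ιU g.F31 * ιU g.F01 - ιU g.F32 * ιU g.F31 * ιU g.H01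
        - ιU g.F32 * ιU g.F32 * ιU g.E01)) := by
  have hD := adUHom_mul g.F21
  have hp := g.hasTopDerivative_E31.map_ιU
  have hq := g.hasTopDerivative_E32.map_ιU
  have hE : adUHom g.F21 (ιU g.E01) = 0 := by rw [adUHom_ιU, lie_F21_E01, ιU_zero]
  have hH : adUHom g.F21 (ιU g.H01) = 0 := by rw [adUHom_ιU, lie_F21_H01, ιU_zero]
  have hF : adUHom g.F21 (ιU g.F01) = 0 := by rw [adUHom_ιU, lie_F21_F01, ιU_zero]
  refine ((((hp.mul hD hp).mul_const hD hE).sub ((hq.mul hD hp).mul_const hD hH)).sub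
    ((hq.mul hD hq).mul_const hD hF)).trans_eq ?_
  have h_choose : Nat.choose 6 3 = 20 := rfl
  simp only [Nat.reduceAdd, h_choose, ιU_smul, mul_smul_comm, smul_mul_assoc,
    (commute_ιU g.lie_F31_F32).eq]
  module

end G2Gens

/-- **Lemma A.4, first family (lem-firststep).**  Identities in `U(𝔤)` for the adjoint action
of powers of `F₂₁` on `a`, `b`, `c`. -/
theorem G2Gens.adF21_identities
    {L : Type*} [LieRing L] [LieAlgebra ℂ L] (g : G2Gens L) :
    (adU g.F21)^[2] g.aU = (-2 : ℂ) • ιU g.F21 ∧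
    (adU g.F21)^[3] g.aU = 0 ∧
    ∃ C₁ C₂ : ℚ, C₁ ≠ 0 ∧ C₂ ≠ 0 ∧
      (adU g.F21)^[4] g.bU =
        (C₁ : ℂ) • (ιU g.F31 * ιU g.F11 - ιU g.F32 * ιU g.F10) ∧
      (adU g.F21)^[6] g.cU =
        (C₂ : ℂ) • (ιU g.F31 * ιU g.F31 * ιU g.F01 - ιU g.F32 * ιU g.F31 * ιU g.H01
          - ιU g.F32 * ιU g.F32 * ιU g.E01) ∧
      (adU g.F21)^[5] g.bU = 0 ∧
      (adU g.F21)^[7] g.cU = 0 := by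
  have ha := g.hasTopDerivative_aU
  have hb := g.hasTopDerivative_bU
  have hc := g.hasTopDerivative_cU
  refine ⟨ha.1, ha.iterate_succ, 24, -720, by norm_num, by norm_num, ?_, ?_,
    hb.iterate_succ, hc.iterate_succ⟩
  · exact_mod_cast hb.1
  · exact_mod_cast hc.1
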